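/- Multiplicativity of the stabilizer Rényi quantity under tensor products (equivalently, additivity of the α-Stabilizer Rényi Entropy): for natural numbers n, m, an integer α ≥ 1, and unit vectors ψ : (Fin n → Fin 2) → ℂ and ω : (Fin m → Fin 2) → ℂ, define the product state (ψ ⊗ ω) : (Fin n → Fin 2) × (Fin m → Fin 2) → ℂ by (ψ ⊗ ω)(a, b) = ψ a · ω b, and for pairs (s, t) : (Fin n → Fin 4) × (Fin m → Fin 4) the composite Pauli string P_{(s,t)} with entries P_{(s,t)} (a,b) (a',b') = P_s a a' · P_t b b'. Then (2^(n+m))⁻¹ · Σ over all (s,t) of (Re⟨ψ ⊗ ω, P_{(s,t)} (ψ ⊗ ω)⟩)^(2α) = A_α(ψ) · A_α(ω). -/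

import Mathlib

open Complex Matrix BigOperators

/-- The single-qubit Pauli matrices `Q₀ = 1`, `Q₁ = X`, `Q₂ = Y`, `Q₃ = Z`. -/
noncomputable def Q : Fin 4 → Matrix (Fin 2) (Fin 2) ℂ :=
  ![1, !![0, 1; 1, 0], !![0, -Complex.I; Complex.I, 0], !![1, 0; 0, -1]]

/-- The `n`-qubit Pauli string `P_s`, the Kronecker product of the `Q (s k)`. -/
noncomputable def P {n : ℕ} (s : Fin n → Fin 4) :
    Matrix (Fin n → Fin 2) (Fin n → Fin 2) ℂ :=
  Matrix.of fun i j => ∏ k, Q (s k) (i k) (j k)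


/-- `A_α(ψ) = d⁻¹ ∑_s ⟨ψ, P_s ψ⟩^(2α)` with `d = 2^n`. -/
noncomputable def A (n α : ℕ) (ψ : (Fin n → Fin 2) → ℂ) : ℝ :=
  (2 ^ n : ℝ)⁻¹ * ∑ s : Fin n → Fin 4, (star ψ ⬝ᵥ (P s).mulVec ψ).re ^ (2 * α)

/-!
For a product vector the expectation of `M ⊗ₖ N` factors as `⟨ψ, M ψ⟩ * ⟨ω, N ω⟩`. Pauli strings
are Hermitian, so their expectations are real and the real part of this product is the product of
the real parts. Powers preserve the factorization, and the double sum then splits.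
-/

open scoped Kronecker

section TensorVec

variable {R ι ι' κ κ' : Type*}

/-- The pure tensor `v ⊗ w` of two coordinate vectors, indexed by pairs as in the Kronecker
product of matrices. -/
def tensorVec [Mul R] (v : ι → R) (w : κ → R) : ι × κ → R :=
  fun p => v p.1 * w p.2

lemma star_tensorVec [CommMagma R] [StarMul R] (v : ι → R) (w : κ → R) :
    star (tensorVec v w) = tensorVec (star v) (star w) :=
  funext fun p => star_mul' (v p.1) (w p.2)

variable [NonUnitalCommSemiring R] [Fintype ι] [Fintype κ]

lemma tensorVec_dotProduct_tensorVec (v v' : ι → R) (w w' : κ → R) :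
    tensorVec v w ⬝ᵥ tensorVec v' w' = (v ⬝ᵥ v') * (w ⬝ᵥ w') := by
  simp only [dotProduct, tensorVec, Fintype.sum_mul_sum, Fintype.sum_prod_type, mul_mul_mul_comm]

lemma kronecker_mulVec_tensorVec (M : Matrix ι' ι R) (N : Matrix κ' κ R) (v : ι → R) (w : κ → R) :
    (M ⊗ₖ N) *ᵥ tensorVec v w = tensorVec (M *ᵥ v) (N *ᵥ w) :=
  funext fun p => tensorVec_dotProduct_tensorVec (M p.1) v (N p.2) w

lemma star_tensorVec_dotProduct_kronecker_mulVec [StarMul R]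
    (M : Matrix ι ι R) (N : Matrix κ κ R) (v : ι → R) (w : κ → R) :
    star (tensorVec v w) ⬝ᵥ (M ⊗ₖ N) *ᵥ tensorVec v w =
      (star v ⬝ᵥ M *ᵥ v) * (star w ⬝ᵥ N *ᵥ w) := by
  rw [star_tensorVec, kronecker_mulVec_tensorVec, tensorVec_dotProduct_tensorVec]

end TensorVec

lemma isHermitian_of_prod_apply {K R : Type*} [Fintype K] [CommMonoid R] [StarMul R]
    {ι : K → Type*} {M : ∀ k, Matrix (ι k) (ι k) R} (hM : ∀ k, (M k).IsHermitian) :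
    (Matrix.of fun i j : ∀ k, ι k => ∏ k, M k (i k) (j k)).IsHermitian :=
  IsHermitian.ext fun i j => by simp only [of_apply, star_prod, (hM _).apply]

lemma Q_isHermitian (a : Fin 4) : (Q a).IsHermitian := by
  ext i j
  fin_cases a <;> fin_cases i <;> fin_cases j <;> simp [Q]

lemma P_isHermitian {n : ℕ} (s : Fin n → Fin 4) : (P s).IsHermitian :=
  isHermitian_of_prod_apply fun k => Q_isHermitian (s k)

section Expectation

variable {𝕜 ι κ : Type*} [RCLike 𝕜] [Fintype ι] [Fintype κ]

lemma re_star_tensorVec_dotProduct_kronecker_mulVec {M : Matrix ι ι 𝕜} (hM : M.IsHermitian)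
    (N : Matrix κ κ 𝕜) (v : ι → 𝕜) (w : κ → 𝕜) :
    RCLike.re (star (tensorVec v w) ⬝ᵥ (M ⊗ₖ N) *ᵥ tensorVec v w) =
      RCLike.re (star v ⬝ᵥ M *ᵥ v) * RCLike.re (star w ⬝ᵥ N *ᵥ w) := by
  rw [star_tensorVec_dotProduct_kronecker_mulVec, RCLike.mul_re,
    hM.im_star_dotProduct_mulVec_self, zero_mul, sub_zero]

theorem A_multiplicative_general {σ τ : Type*} [Fintype σ] [Fintype τ]
    {M : σ → Matrix ι ι 𝕜} (hM : ∀ s, (M s).IsHermitian) (N : τ → Matrix κ κ 𝕜)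
    (v : ι → 𝕜) (w : κ → 𝕜) (r : ℕ) :
    ∑ st : σ × τ,
        RCLike.re (star (tensorVec v w) ⬝ᵥ (M st.1 ⊗ₖ N st.2) *ᵥ tensorVec v w) ^ r =
      (∑ s, RCLike.re (star v ⬝ᵥ M s *ᵥ v) ^ r) * ∑ t, RCLike.re (star w ⬝ᵥ N t *ᵥ w) ^ r := by
  simp only [re_star_tensorVec_dotProduct_kronecker_mulVec (hM _), mul_pow,
    Fintype.sum_mul_sum, Fintype.sum_prod_type]

end Expectation

theorem A_multiplicative (n m α : ℕ) (hα : 1 ≤ α)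
    (ψ : (Fin n → Fin 2) → ℂ) (hψ : star ψ ⬝ᵥ ψ = 1)
    (ω : (Fin m → Fin 2) → ℂ) (hω : star ω ⬝ᵥ ω = 1) :
    (2 ^ (n + m) : ℝ)⁻¹ * ∑ st : (Fin n → Fin 4) × (Fin m → Fin 4),
        ((star fun p : (Fin n → Fin 2) × (Fin m → Fin 2) => ψ p.1 * ω p.2) ⬝ᵥ
          (Matrix.of fun p q : (Fin n → Fin 2) × (Fin m → Fin 2) =>
            P st.1 p.1 q.1 * P st.2 p.2 q.2).mulVec
          (fun p => ψ p.1 * ω p.2)).re ^ (2 * α)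
      = A n α ψ * A m α ω := by
  rw [A, A, mul_mul_mul_comm, ← mul_inv, ← pow_add]
  exact congrArg _ (A_multiplicative_general P_isHermitian P ψ ω (2 * α))
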